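/- arXiv:2303.01721 — 3 statements merged into one kernel-verified Lean document; each statement's English description precedes it below -/
import Mathlib

section
/- Let I be an ideal of 𝕡 with full count. Then the I^c-ball about 0 taken with respect to the dual pomset 𝕡̃ equals the orthogonal complement of the I-ball about 0 taken with respect to 𝕡, i.e. B_{I^c,𝕡̃} = {v ∈ ℤ_m^n : c·v = 0 for all c ∈ B_{I,𝕡}}. -/
open scoped Classical

noncomputable section

/-- Lee weight of an element of `ZMod m`. -/
def leeWt (m : ℕ) (a : ZMod m) : ℕ := min a.val (m - a.val)

/-- Block Lee weight of the `i`-th block of `u`. -/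
def blockWt (m s : ℕ) (π : Fin s → ℕ) (u : ∀ i : Fin s, Fin (π i) → ZMod m)
    (i : Fin s) : ℕ :=
  Finset.univ.sup fun t => leeWt m (u i t)

/-- The `(𝕡,π)`-weight of `u`. -/
def pomsetWt (m s : ℕ) (P : PartialOrder (Fin s)) (π : Fin s → ℕ)
    (u : ∀ i : Fin s, Fin (π i) → ZMod m) : ℕ :=
  ∑ i : Fin s,
    if ∃ j, j ≠ i ∧ P.le i j ∧ 0 < blockWt m s π u j then m / 2
    else blockWt m s π u i

/-- The pomset block distance. -/
def pomsetDist (m s : ℕ) (P : PartialOrder (Fin s)) (π : Fin s → ℕ)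
    (u v : ∀ i : Fin s, Fin (π i) → ZMod m) : ℕ :=
  pomsetWt m s P π (u - v)

/-- An ideal of the pomset `𝕡`, given by its count function `I : [s] → {0,…,⌊m/2⌋}`. -/
def IsIdeal (m s : ℕ) (P : PartialOrder (Fin s)) (I : Fin s → ℕ) : Prop :=
  (∀ a, I a ≤ m / 2) ∧ ∀ a b, 0 < I a → P.le b a → b ≠ a → I b = m / 2

/-- An ideal has full count if every element of its root set has count `⌊m/2⌋`. -/
def FullCount (m : ℕ) {s : ℕ} (I : Fin s → ℕ) : Prop :=
  ∀ a, 0 < I a → I a = m / 2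

/-- The cardinality `|I|` of an ideal. -/
def idealCard {s : ℕ} (I : Fin s → ℕ) : ℕ := ∑ a, I a

/-- The cardinality `|I*|` of the root set of an ideal. -/
def rootCard {s : ℕ} (I : Fin s → ℕ) : ℕ :=
  (Finset.univ.filter fun a => 0 < I a).card

/-- `Σ_{i ∈ I*} k_i`. -/
def rootSum {s : ℕ} (π I : Fin s → ℕ) : ℕ :=
  ∑ a ∈ Finset.univ.filter (fun a => 0 < I a), π a

/-- The `I`-ball centered at `u`. -/
def ballI (m s : ℕ) (π : Fin s → ℕ) (I : Fin s → ℕ)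
    (u : ∀ i : Fin s, Fin (π i) → ZMod m) :
    Set (∀ i : Fin s, Fin (π i) → ZMod m) :=
  {v | ∀ i, blockWt m s π (u - v) i ≤ I i}

/-- `𝒞` is `I`-perfect: the `I`-balls centered at codewords are pairwise
disjoint and cover the whole space. -/
def IPerfect (m s : ℕ) (π : Fin s → ℕ) (I : Fin s → ℕ)
    (C : Set (∀ i : Fin s, Fin (π i) → ZMod m)) : Prop :=
  (C.Pairwise fun c c' => Disjoint (ballI m s π I c) (ballI m s π I c')) ∧
  (⋃ c ∈ C, ballI m s π I c) = Set.univ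

/-- The `r`-ball centered at `u`. -/
def ballR (m s : ℕ) (P : PartialOrder (Fin s)) (π : Fin s → ℕ) (r : ℕ)
    (u : ∀ i : Fin s, Fin (π i) → ZMod m) :
    Set (∀ i : Fin s, Fin (π i) → ZMod m) :=
  {v | pomsetDist m s P π u v ≤ r}

/-- The standard dot product on `ℤ_m^n`. -/
def dotProd (m s : ℕ) (π : Fin s → ℕ)
    (c v : ∀ i : Fin s, Fin (π i) → ZMod m) : ZMod m :=
  ∑ i, ∑ t, c i t * v i t

/-- The dual code `𝒞^⊥`. -/
def dualCode (m s : ℕ) (π : Fin s → ℕ)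
    (C : Set (∀ i : Fin s, Fin (π i) → ZMod m)) :
    Set (∀ i : Fin s, Fin (π i) → ZMod m) :=
  {v | ∀ c ∈ C, dotProd m s π c v = 0}

/-- The dual pomset, encoded by the opposite partial order. -/
def dualOrder (s : ℕ) (P : PartialOrder (Fin s)) : PartialOrder (Fin s) where
  le a b := P.le b a
  lt a b := P.lt b a
  le_refl a := P.le_refl a
  le_trans a b c h1 h2 := P.le_trans _ _ _ h2 h1
  lt_iff_le_not_ge a b := P.lt_iff_le_not_ge b a
  le_antisymm a b h1 h2 := (P.le_antisymm _ _ h1 h2).symm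

/-- The minimum `(𝕡,π)`-distance of a code. -/
def minDist (m s : ℕ) (P : PartialOrder (Fin s)) (π : Fin s → ℕ)
    (C : Set (∀ i : Fin s, Fin (π i) → ZMod m)) : ℕ :=
  sInf {r | ∃ c ∈ C, ∃ c' ∈ C, c ≠ c' ∧ r = pomsetWt m s P π (c - c')}

/-- `𝒞` is an MDS `(𝕡,π)`-code: it attains the Singleton bound
`n − ⌈log_m K⌉ ≥ max { Σ_{i∈I*} k_i : I ideal, |I*| = ⌊(d−1)/⌊m/2⌋⌋ }`. -/
def IsMDS (m s : ℕ) (P : PartialOrder (Fin s)) (π : Fin s → ℕ)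
    (C : Set (∀ i : Fin s, Fin (π i) → ZMod m)) : Prop :=
  (∀ I, IsIdeal m s P I →
      rootCard I = (minDist m s P π C - 1) / (m / 2) →
      rootSum π I ≤ (∑ i, π i) - Nat.clog m (Nat.card ↥C)) ∧
  (∃ I, IsIdeal m s P I ∧
      rootCard I = (minDist m s P π C - 1) / (m / 2) ∧
      rootSum π I = (∑ i, π i) - Nat.clog m (Nat.card ↥C))

/-- The chain pomset on `[s]`: the usual total order on `Fin s`. -/
def chainOrder (s : ℕ) : PartialOrder (Fin s) := inferInstance

/-!
A ball of full count puts no condition on a block in the root set, since `⌊m/2⌋` is the largest Lee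
weight, and forces every other block to agree with the center. Around `0` it is therefore a
coordinate submodule, whose orthogonal complement is the complementary coordinate submodule; and
passing from `I` to `I^c` complements the root set.
-/

theorem leeWt_le_half (m : ℕ) (a : ZMod m) : leeWt m a ≤ m / 2 := by
  unfold leeWt
  lia

theorem leeWt_eq_zero_iff {m : ℕ} [NeZero m] {a : ZMod m} : leeWt m a = 0 ↔ a = 0 := by
  have hlt : a.val < m := a.val_lt
  rw [← ZMod.val_eq_zero, leeWt]
  lia

theorem blockWt_le_half {m s : ℕ} {π : Fin s → ℕ} (u : ∀ i : Fin s, Fin (π i) → ZMod m)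
    (i : Fin s) : blockWt m s π u i ≤ m / 2 :=
  Finset.sup_le fun t _ => leeWt_le_half m (u i t)

theorem blockWt_eq_zero_iff {m s : ℕ} [NeZero m] {π : Fin s → ℕ}
    {u : ∀ i : Fin s, Fin (π i) → ZMod m} {i : Fin s} : blockWt m s π u i = 0 ↔ u i = 0 := by
  rw [blockWt, ← Nat.le_zero, Finset.sup_le_iff]
  simp only [Finset.mem_univ, true_imp_iff, Nat.le_zero, leeWt_eq_zero_iff, funext_iff,
    Pi.zero_apply]

theorem FullCount.ballI_eq_pi {m s : ℕ} [NeZero m] {I : Fin s → ℕ} (hI : FullCount m I)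
    (π : Fin s → ℕ) (u : ∀ i : Fin s, Fin (π i) → ZMod m) :
    ballI m s π I u = {i | I i = 0}.pi fun i => {u i} := by
  ext v
  refine forall_congr' fun i => ?_
  rcases Nat.eq_zero_or_pos (I i) with hi | hi
  · have hblock : blockWt m s π (u - v) i ≤ 0 ↔ v i = u i := by
      rw [Nat.le_zero, blockWt_eq_zero_iff, Pi.sub_apply, sub_eq_zero, eq_comm]
    simpa only [Set.mem_ofPred_eq, hi, true_imp_iff, Set.mem_singleton_iff] using hblock
  · exact iff_of_true ((blockWt_le_half _ i).trans_eq (hI i hi).symm) fun h => absurd h hi.ne'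

theorem FullCount.compl {m s : ℕ} {I : Fin s → ℕ} (hI : FullCount m I) :
    FullCount m fun i => m / 2 - I i := by
  intro i hi
  have := hI i
  lia

theorem FullCount.compl_eq_zero_iff {m s : ℕ} (hm : 2 ≤ m) {I : Fin s → ℕ}
    (hI : FullCount m I) (i : Fin s) : m / 2 - I i = 0 ↔ I i ≠ 0 := by
  have := hI i
  lia

theorem orthogonal_pi_zero {ι R : Type*} [Fintype ι] {κ : ι → Type*} [∀ i, Fintype (κ i)]
    [NonAssocSemiring R] (A : Set ι) :
    {v : ∀ i, κ i → R | ∀ c ∈ A.pi fun _ => {0}, ∑ i, c i ⬝ᵥ v i = 0} =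
      Aᶜ.pi fun _ => {0} := by
  ext v
  constructor
  · intro hv i hi
    funext t
    have hsingle : (Pi.single i (Pi.single t 1) : ∀ j, κ j → R) ∈ A.pi fun _ => {0} :=
      fun j hj => Pi.single_eq_of_ne (ne_of_mem_of_not_mem hj hi) _
    have hsum : ∑ j, (Pi.single i (Pi.single t 1) : ∀ j, κ j → R) j ⬝ᵥ v j = v i t := by
      rw [Fintype.sum_eq_single i fun j hj => by rw [Pi.single_eq_of_ne hj, zero_dotProduct],
        Pi.single_eq_same, single_one_dotProduct]
    exact hsum.symm.trans (hv _ hsingle)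
  · intro hv c hc
    refine Finset.sum_eq_zero fun i _ => ?_
    by_cases hi : i ∈ A
    · rw [hc i hi, zero_dotProduct]
    · rw [hv i hi, dotProduct_zero]

theorem dual_ball_eq_orthogonal_general {m s : ℕ} (hm : 2 ≤ m) (π : Fin s → ℕ)
    {I : Fin s → ℕ} (hI : FullCount m I) :
    ballI m s π (fun i => m / 2 - I i) 0 = dualCode m s π (ballI m s π I 0) := by
  have : NeZero m := ⟨by lia⟩
  have hzeros : {i | m / 2 - I i = 0} = {i | I i = 0}ᶜ :=
    Set.ext (hI.compl_eq_zero_iff hm)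
  rw [hI.compl.ballI_eq_pi, hI.ballI_eq_pi, hzeros]
  exact (orthogonal_pi_zero _).symm

/-- `B_{I^c,𝕡̃}` equals the orthogonal complement of `B_{I,𝕡}`. -/
theorem dual_ball_eq_orthogonal
    (m s : ℕ) (hm : 4 ≤ m) (hs : 1 ≤ s)
    (P : PartialOrder (Fin s)) (π : Fin s → ℕ) (hπ : ∀ i, 0 < π i)
    (I : Fin s → ℕ) (hI : IsIdeal m s P I) (hfull : FullCount m I) :
    ballI m s π (fun a => m / 2 - I a) (0 : ∀ i : Fin s, Fin (π i) → ZMod m) =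
      {v | ∀ c ∈ ballI m s π I (0 : ∀ i : Fin s, Fin (π i) → ZMod m),
        dotProd m s π c v = 0} :=
  dual_ball_eq_orthogonal_general (by lia) π hfull

end
end

section
/- Let 𝒞 ⊆ ℤ_m^n be an r-error correcting (𝕡,π)-code, where r ∈ ℕ is a multiple of l = ⌊m/2⌋. Then for all c, c′ ∈ 𝒞 with c ≠ c′ and all ideals I, I′ of 𝕡 with full count and |I| = |I′| = r, one has c − c′ ∉ B_{I⊕I′}, where I⊕I′ is the ideal given by (I⊕I′)(a) = min(l, I(a) + I′(a)). -/
open scoped Classical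

noncomputable section

/-! The triangle inequality for the Lee weight is sharp: if `x - y` has Lee weight at most `i + j`,
then some `z` is within `i` of `x` and within `j` of `y`. Applied entrywise, this makes the `I`-ball
at `c` meet the `I'`-ball at `c'` whenever `c - c'` lies in the `I ⊕ I'`-ball at `0`. For an ideal
`I` of cardinality at most `r` the `I`-ball lies in the `r`-ball with the same center, because a
block below a nonzero block of the difference already has count `⌊m/2⌋` in `I`. Hence the `r`-balls
at `c` and `c'` would meet. -/

theorem exists_int_sub_eq_of_natAbs_le_add {k : ℤ} {i j : ℕ} (h : k.natAbs ≤ i + j) :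
    ∃ p q : ℤ, p - q = k ∧ p.natAbs ≤ i ∧ q.natAbs ≤ j := by
  let p : ℤ := max (-i) (min i k)
  exact ⟨p, p - k, by omega, by omega, by omega⟩

section LeeWeight

variable {m : ℕ} [NeZero m]

theorem leeWt_eq_natAbs_valMinAbs (a : ZMod m) : leeWt m a = a.valMinAbs.natAbs :=
  a.valMinAbs_natAbs_eq_min.symm

theorem leeWt_intCast_le_natAbs (k : ℤ) : leeWt m (k : ZMod m) ≤ k.natAbs := by
  rw [leeWt_eq_natAbs_valMinAbs]
  exact ZMod.natAbs_min_of_le_div_two m _ k (ZMod.coe_valMinAbs _) (ZMod.natAbs_valMinAbs_le _)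

theorem exists_leeWt_sub_le_of_leeWt_sub_le_add {x y : ZMod m} {i j : ℕ}
    (h : leeWt m (x - y) ≤ i + j) :
    ∃ z, leeWt m (x - z) ≤ i ∧ leeWt m (y - z) ≤ j := by
  rw [leeWt_eq_natAbs_valMinAbs] at h
  obtain ⟨p, q, hpq, hp, hq⟩ := exists_int_sub_eq_of_natAbs_le_add h
  have hxy : (p : ZMod m) - q = x - y := by
    rw [← Int.cast_sub, hpq, ZMod.coe_valMinAbs]
  refine ⟨x - p, ?_, ?_⟩
  · rw [sub_sub_cancel]
    exact (leeWt_intCast_le_natAbs p).trans hp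
  · rw [show y - (x - p) = q by linear_combination hxy]
    exact (leeWt_intCast_le_natAbs q).trans hq

end LeeWeight

section Balls

variable {m s : ℕ} {P : PartialOrder (Fin s)} {π : Fin s → ℕ} {I I' : Fin s → ℕ}
  {u v : ∀ i : Fin s, Fin (π i) → ZMod m}

theorem mem_ballI_iff : v ∈ ballI m s π I u ↔ ∀ i t, leeWt m (u i t - v i t) ≤ I i := by
  simp [ballI, blockWt]

theorem sub_mem_ballI_zero_iff : u - v ∈ ballI m s π I 0 ↔ u ∈ ballI m s π I v := by
  simp [ballI]

theorem ballI_inter_ballI_nonempty [NeZero m] (h : u ∈ ballI m s π (I + I') v) :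
    (ballI m s π I v ∩ ballI m s π I' u).Nonempty := by
  choose z hzv hzu using fun i t =>
    exists_leeWt_sub_le_of_leeWt_sub_le_add (mem_ballI_iff.mp h i t)
  exact ⟨z, mem_ballI_iff.mpr hzv, mem_ballI_iff.mpr hzu⟩

theorem pomsetWt_le_idealCard (hI : IsIdeal m s P I) (hu : ∀ i, blockWt m s π u i ≤ I i) :
    pomsetWt m s P π u ≤ idealCard I := by
  refine Finset.sum_le_sum fun i _ => ?_
  split_ifs with hi
  · obtain ⟨j, hji, hij, hj⟩ := hi
    exact (hI.2 j i (hj.trans_le (hu j)) hij hji.symm).ge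
  · exact hu i

theorem ballI_subset_ballR {r : ℕ} (hI : IsIdeal m s P I) (hr : idealCard I ≤ r) :
    ballI m s π I u ⊆ ballR m s P π r u :=
  fun _ hv => (pomsetWt_le_idealCard hI hv).trans hr

end Balls

theorem r_error_correcting_avoids_sum_ball_general
    {m s : ℕ} [NeZero m] {P : PartialOrder (Fin s)} {π : Fin s → ℕ}
    {C : Set (∀ i : Fin s, Fin (π i) → ZMod m)} {r : ℕ}
    (hC : C.Pairwise fun c c' => Disjoint (ballR m s P π r c) (ballR m s P π r c'))
    {c c' : ∀ i : Fin s, Fin (π i) → ZMod m} (hc : c ∈ C) (hc' : c' ∈ C) (hne : c ≠ c')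
    {I I' : Fin s → ℕ} (hI : IsIdeal m s P I) (hI' : IsIdeal m s P I')
    (hr : idealCard I ≤ r) (hr' : idealCard I' ≤ r) :
    c - c' ∉ ballI m s π (fun a => min (m / 2) (I a + I' a)) 0 := by
  intro hmem
  have hsum : c ∈ ballI m s π (I' + I) c' := fun i =>
    (sub_mem_ballI_zero_iff.mp hmem i).trans ((min_le_right _ _).trans_eq (add_comm _ _))
  obtain ⟨z, hz', hz⟩ := ballI_inter_ballI_nonempty hsum
  exact Set.disjoint_left.mp (hC hc hc' hne)
    (ballI_subset_ballR hI hr hz) (ballI_subset_ballR hI' hr' hz')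

/-- for an `r`-error correcting code with `⌊m/2⌋ ∣ r`, differences of
distinct codewords avoid `B_{I ⊕ I'}` for full-count ideals of cardinality `r`. -/
theorem r_error_correcting_avoids_sum_ball
    (m s : ℕ) (hm : 4 ≤ m) (hs : 1 ≤ s)
    (P : PartialOrder (Fin s)) (π : Fin s → ℕ) (hπ : ∀ i, 0 < π i)
    (C : Set (∀ i : Fin s, Fin (π i) → ZMod m))
    (r : ℕ) (hr : (m / 2) ∣ r)
    (hC : C.Pairwise fun c c' =>
      Disjoint (ballR m s P π r c) (ballR m s P π r c')) :
    ∀ c ∈ C, ∀ c' ∈ C, c ≠ c' →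
      ∀ I I' : Fin s → ℕ, IsIdeal m s P I → IsIdeal m s P I' →
        FullCount m I → FullCount m I' →
        idealCard I = r → idealCard I' = r →
        c - c' ∉ ballI m s π (fun a => min (m / 2) (I a + I' a)) 0 := by
  have : NeZero m := ⟨by omega⟩
  intro c hc c' hc' hne I I' hI hI' _ _ hcard hcard'
  exact r_error_correcting_avoids_sum_ball_general hC hc hc' hne hI hI' hcard.le hcard'.le

end
end

section
/- Let 𝒞 ⊆ ℤ_m^n be a linear (n, m^k, d) (𝕡,π)-code. Then 𝒞 is an MDS (𝕡,π)-code if and only if there exists an ideal I of 𝕡 with full count and |I| = l·⌊(d−1)/l⌋ such that 𝒞 is I-perfect. -/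
open scoped Classical

noncomputable section

/-!
Fix an ideal `I` with full count. Lee balls of radius `⌊m/2⌋` fill a whole block, so the `I`-ball
around `u` consists of all words agreeing with `u` off the root set `I*`: it is a fibre of the map
puncturing a word at `I*`. Hence a code is `I`-perfect exactly when puncturing at `I*` maps it
bijectively onto `ℤ_m^{n - Σ_{i ∈ I*} k_i}`.

A word supported on `I*` has weight at most `⌊m/2⌋ |I*|`, so puncturing is injective on the code as
soon as `⌊m/2⌋ |I*| ≤ d - 1`. Counting gives the Singleton bound, and equality in that bound is
bijectivity. Since the bound only sees the root set of an ideal, an ideal attaining it may be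
replaced by the one of full count with the same root set.
-/

theorem bijOn_univ_iff_natCard_eq {α β : Type*} [Finite β] {f : α → β} {A : Set α}
    (hf : A.InjOn f) : A.BijOn f Set.univ ↔ Nat.card A = Nat.card β := by
  calc A.BijOn f Set.univ
      ↔ f '' A = Set.univ := ⟨Set.BijOn.image_eq, fun h => h ▸ hf.bijOn_image⟩
    _ ↔ (f '' A).ncard = Nat.card β := Set.eq_univ_iff_ncard _
    _ ↔ Nat.card A = Nat.card β := by rw [hf.ncard_image, Nat.card_coe_set_eq]

/-- The word `u` punctured at the root set of the ideal with count function `I`: only the blocks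
of count zero are kept. -/
def puncture {ι : Type*} {β : ι → Type*} (I : ι → ℕ) (u : ∀ i, β i) :
    ∀ i : {i // I i = 0}, β i :=
  Subtype.restrict (fun i => I i = 0) u

theorem puncture_surjective {ι : Type*} {β : ι → Type*} [∀ i, Nonempty (β i)] (I : ι → ℕ) :
    Function.Surjective (puncture (β := β) I) :=
  Subtype.surjective_restrict _

section

variable {m s : ℕ} {P : PartialOrder (Fin s)} {π I : Fin s → ℕ}
  {u v : ∀ i : Fin s, Fin (π i) → ZMod m} {C : Set (∀ i : Fin s, Fin (π i) → ZMod m)}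

theorem leeWt_le (a : ZMod m) : leeWt m a ≤ m / 2 := by
  unfold leeWt
  omega

theorem leeWt_eq_zero [NeZero m] {a : ZMod m} : leeWt m a = 0 ↔ a = 0 := by
  have h := ZMod.val_lt a
  rw [← ZMod.val_eq_zero]
  unfold leeWt
  omega

theorem blockWt_le (u : ∀ i : Fin s, Fin (π i) → ZMod m) (i : Fin s) :
    blockWt m s π u i ≤ m / 2 :=
  Finset.sup_le fun _ _ => leeWt_le _

theorem blockWt_eq_zero [NeZero m] {i : Fin s} : blockWt m s π u i = 0 ↔ u i = 0 := by
  rw [blockWt, ← Nat.bot_eq_zero, Finset.sup_eq_bot_iff, funext_iff]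
  simp [leeWt_eq_zero]

theorem pomsetWt_pos [NeZero m] (hu : u ≠ 0) : 0 < pomsetWt m s P π u := by
  obtain ⟨i, hi⟩ := Function.ne_iff.1 hu
  have hblock : 0 < blockWt m s π u i := Nat.pos_of_ne_zero (blockWt_eq_zero.not.2 hi)
  refine Finset.sum_pos' (fun _ _ => Nat.zero_le _) ⟨i, Finset.mem_univ i, ?_⟩
  split_ifs
  · exact hblock.trans_le (blockWt_le u i)
  · exact hblock

theorem pos_of_blockWt_pos [NeZero m] (hu : puncture I u = 0) {i : Fin s}
    (hi : 0 < blockWt m s π u i) : 0 < I i := by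
  refine Nat.pos_of_ne_zero fun hIi => hi.ne' (blockWt_eq_zero.2 ?_)
  exact congrFun hu ⟨i, hIi⟩

theorem IsIdeal.pomsetWt_le [NeZero m] (hI : IsIdeal m s P I) (hu : puncture I u = 0) :
    pomsetWt m s P π u ≤ rootCard I * (m / 2) := by
  rw [rootCard, ← smul_eq_mul, ← Finset.sum_const, Finset.sum_filter]
  refine Finset.sum_le_sum fun i _ => ?_
  split_ifs with hbelow hi hi
  · exact le_rfl
  · obtain ⟨j, hji, hij, hj⟩ := hbelow
    exact (hI.2 j i (pos_of_blockWt_pos hu hj) hij hji.symm).ge.trans (not_lt.1 hi)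
  · exact blockWt_le u i
  · exact not_lt.1 (mt (pos_of_blockWt_pos hu) hi)

theorem minDist_le_pomsetWt_sub (hu : u ∈ C) (hv : v ∈ C) (huv : u ≠ v) :
    minDist m s P π C ≤ pomsetWt m s P π (u - v) :=
  Nat.sInf_le ⟨u, hu, v, hv, huv, rfl⟩

theorem IsIdeal.injOn_puncture [NeZero m] (hI : IsIdeal m s P I)
    (hr : rootCard I * (m / 2) ≤ minDist m s P π C - 1) : C.InjOn (puncture I) := by
  intro c hc c' hc' hcc'
  by_contra hne
  have hsupp : puncture I (c - c') = 0 := sub_eq_zero.2 hcc'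
  have hle : pomsetWt m s P π (c - c') ≤ rootCard I * (m / 2) := hI.pomsetWt_le hsupp
  have hmin : minDist m s P π C ≤ pomsetWt m s P π (c - c') := minDist_le_pomsetWt_sub hc hc' hne
  have hpos : 0 < pomsetWt m s P π (c - c') := pomsetWt_pos (sub_ne_zero.2 hne)
  omega

theorem rootSum_add_sum_subtype (π I : Fin s → ℕ) :
    rootSum π I + ∑ i : {i // I i = 0}, π i = ∑ i, π i := by
  rw [rootSum, ← Finset.sum_filter_add_sum_filter_not Finset.univ (fun i => 0 < I i) π]
  congr 1
  exact (Finset.sum_subtype _ (by simp) π).symm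

theorem natCard_punctured (m : ℕ) (π I : Fin s → ℕ) :
    Nat.card (∀ i : {i // I i = 0}, Fin (π i) → ZMod m) = m ^ ((∑ i, π i) - rootSum π I) := by
  rw [← rootSum_add_sum_subtype π I, Nat.add_sub_cancel_left]
  simp [Nat.card_pi, Finset.prod_pow_eq_pow_sum]

theorem natCard_le_of_injOn_puncture [NeZero m] (h : C.InjOn (puncture I)) :
    Nat.card C ≤ m ^ ((∑ i, π i) - rootSum π I) := by
  rw [← natCard_punctured]
  exact Nat.card_le_card_of_injective _ h.injective

theorem rootSum_le_sub_clog [NeZero m] (h : C.InjOn (puncture I)) :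
    rootSum π I ≤ (∑ i, π i) - Nat.clog m (Nat.card C) := by
  have hclog := Nat.clog_le_of_le_pow (natCard_le_of_injOn_puncture h)
  have hsum := rootSum_add_sum_subtype π I
  omega

theorem rootSum_eq_sub_iff_bijOn_puncture (hm : 2 ≤ m) {k : ℕ} (hC : Nat.card C = m ^ k)
    (h : C.InjOn (puncture I)) :
    rootSum π I = (∑ i, π i) - k ↔ C.BijOn (puncture I) Set.univ := by
  have : NeZero m := ⟨by omega⟩
  have hk : k ≤ (∑ i, π i) - rootSum π I :=
    (Nat.pow_le_pow_iff_right hm).1 (hC ▸ natCard_le_of_injOn_puncture h)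
  have hsum := rootSum_add_sum_subtype π I
  rw [bijOn_univ_iff_natCard_eq h, hC, natCard_punctured, Nat.pow_right_inj hm]
  omega

theorem FullCount.mem_ballI_iff [NeZero m] (hI : FullCount m I) :
    v ∈ ballI m s π I u ↔ puncture I u = puncture I v := by
  have hblock (i : Fin s) : blockWt m s π (u - v) i ≤ I i ↔ (I i = 0 → u i = v i) := by
    rcases Nat.eq_zero_or_pos (I i) with hi | hi
    · rw [hi, Nat.le_zero, blockWt_eq_zero, Pi.sub_apply, sub_eq_zero]
      exact ⟨fun h _ => h, fun h => h rfl⟩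
    · exact iff_of_true ((blockWt_le _ i).trans_eq (hI i hi).symm) fun h => absurd h hi.ne'
  calc v ∈ ballI m s π I u
      ↔ ∀ i, I i = 0 → u i = v i := forall_congr' hblock
    _ ↔ puncture I u = puncture I v := by rw [funext_iff, Subtype.forall]; rfl

theorem FullCount.iPerfect_iff_bijOn_puncture [NeZero m] (hI : FullCount m I) :
    IPerfect m s π I C ↔ C.BijOn (puncture I) Set.univ := by
  have hpacking : (C.Pairwise fun c c' => Disjoint (ballI m s π I c) (ballI m s π I c')) ↔
      C.InjOn (puncture I) := by
    constructor
    · intro hdisj c hc c' hc' hcc'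
      by_contra hne
      exact Set.disjoint_left.1 (hdisj hc hc' hne) (hI.mem_ballI_iff.2 rfl)
        (hI.mem_ballI_iff.2 hcc'.symm)
    · intro hinj c hc c' hc' hne
      refine Set.disjoint_left.2 fun v hv hv' => hne (hinj hc hc' ?_)
      exact (hI.mem_ballI_iff.1 hv).trans (hI.mem_ballI_iff.1 hv').symm
  have hcovering : (⋃ c ∈ C, ballI m s π I c) = Set.univ ↔
      C.SurjOn (puncture I) Set.univ := by
    have hunion : (⋃ c ∈ C, ballI m s π I c) = puncture I ⁻¹' (puncture I '' C) := by
      ext v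
      simp [hI.mem_ballI_iff]
    rw [hunion, Set.preimage_eq_univ_iff, (puncture_surjective I).range_eq, Set.SurjOn]
  rw [IPerfect, hpacking, hcovering]
  exact ⟨fun h => ⟨Set.mapsTo_univ _ _, h⟩, And.right⟩

theorem FullCount.idealCard_eq (hI : FullCount m I) : idealCard I = m / 2 * rootCard I := by
  have hval (a : Fin s) : I a = if 0 < I a then m / 2 else 0 := by
    split_ifs with ha
    · exact hI a ha
    · omega
  rw [idealCard, Finset.sum_congr rfl fun a _ => hval a, ← Finset.sum_filter, Finset.sum_const,
    smul_eq_mul, mul_comm, rootCard]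

/-- The ideal of full count with the same root set as `I`. -/
def saturate (m : ℕ) (I : Fin s → ℕ) (a : Fin s) : ℕ :=
  if 0 < I a then m / 2 else 0

theorem saturate_pos_iff (hm : 2 ≤ m) {a : Fin s} : 0 < saturate m I a ↔ 0 < I a := by
  unfold saturate
  split_ifs <;> omega

theorem fullCount_saturate (m : ℕ) (I : Fin s → ℕ) : FullCount m (saturate m I) := by
  unfold FullCount saturate
  grind

theorem isIdeal_saturate (hm : 2 ≤ m) (hI : IsIdeal m s P I) :
    IsIdeal m s P (saturate m I) := by
  refine ⟨fun a => ?_, fun a b ha hba hne => fullCount_saturate m I b ?_⟩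
  · unfold saturate
    split_ifs <;> omega
  · have hb : I b = m / 2 := hI.2 a b ((saturate_pos_iff hm).1 ha) hba hne
    exact (saturate_pos_iff hm).2 (by omega)

theorem rootCard_saturate (hm : 2 ≤ m) : rootCard (saturate m I) = rootCard I := by
  simp only [rootCard, saturate_pos_iff hm]

theorem rootSum_saturate (hm : 2 ≤ m) : rootSum π (saturate m I) = rootSum π I := by
  simp only [rootSum, saturate_pos_iff hm]

theorem isMDS_iff_exists_fullCount (hm : 2 ≤ m) :
    IsMDS m s P π C ↔ ∃ I, IsIdeal m s P I ∧ FullCount m I ∧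
      rootCard I = (minDist m s P π C - 1) / (m / 2) ∧
      rootSum π I = (∑ i, π i) - Nat.clog m (Nat.card C) := by
  have : NeZero m := ⟨by omega⟩
  constructor
  · rintro ⟨-, J, hJ, hcard, hsum⟩
    exact ⟨saturate m J, isIdeal_saturate hm hJ, fullCount_saturate m J,
      (rootCard_saturate hm).trans hcard, (rootSum_saturate hm).trans hsum⟩
  · rintro ⟨I, hI, -, hcard, hsum⟩
    refine ⟨fun J hJ hr => rootSum_le_sub_clog (hJ.injOn_puncture ?_), I, hI, hcard, hsum⟩
    exact hr ▸ Nat.div_mul_le_self _ _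

end

theorem mds_iff_I_perfect_general {m s : ℕ} (hm : 2 ≤ m) (P : PartialOrder (Fin s))
    (π : Fin s → ℕ) {k d : ℕ} (C : Set (∀ i : Fin s, Fin (π i) → ZMod m))
    (hC : Nat.card C = m ^ k)
    (hd : IsLeast {r | ∃ c ∈ C, ∃ c' ∈ C, c ≠ c' ∧ r = pomsetWt m s P π (c - c')} d) :
    IsMDS m s P π C ↔
      ∃ I, IsIdeal m s P I ∧ FullCount m I ∧
        idealCard I = (m / 2) * ((d - 1) / (m / 2)) ∧ IPerfect m s π I C := by
  have : NeZero m := ⟨by omega⟩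
  obtain rfl : minDist m s P π C = d := hd.csInf_eq
  rw [isMDS_iff_exists_fullCount hm, hC, Nat.clog_pow m k hm]
  refine exists_congr fun I => and_congr_right fun hI => and_congr_right fun hfull => ?_
  rw [hfull.idealCard_eq, Nat.mul_right_inj (by omega), hfull.iPerfect_iff_bijOn_puncture]
  refine and_congr_right fun hr => rootSum_eq_sub_iff_bijOn_puncture hm hC ?_
  exact hI.injOn_puncture (hr ▸ Nat.div_mul_le_self _ _)

/-- a linear code is MDS iff it is `I`-perfect for some full-count
ideal of cardinality `⌊m/2⌋·⌊(d−1)/⌊m/2⌋⌋`. -/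
theorem mds_iff_I_perfect
    (m s : ℕ) (hm : 4 ≤ m) (hs : 1 ≤ s)
    (P : PartialOrder (Fin s)) (π : Fin s → ℕ) (hπ : ∀ i, 0 < π i)
    (n k d : ℕ) (hn : n = ∑ i, π i)
    (C : Submodule (ZMod m) (∀ i : Fin s, Fin (π i) → ZMod m))
    (hcard : Nat.card ↥C = m ^ k)
    (hd : IsLeast {r | ∃ c ∈ (C : Set (∀ i : Fin s, Fin (π i) → ZMod m)),
      ∃ c' ∈ (C : Set (∀ i : Fin s, Fin (π i) → ZMod m)), c ≠ c' ∧
        r = pomsetWt m s P π (c - c')} d) :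
    IsMDS m s P π (C : Set (∀ i : Fin s, Fin (π i) → ZMod m)) ↔
      ∃ I, IsIdeal m s P I ∧ FullCount m I ∧
        idealCard I = (m / 2) * ((d - 1) / (m / 2)) ∧
        IPerfect m s π I (C : Set (∀ i : Fin s, Fin (π i) → ZMod m)) := by
  exact mds_iff_I_perfect_general (le_trans (by norm_num) hm) P π (C : Set _) hcard hd

end
end
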